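/- arXiv:2405.09254 — 2 statements merged into one kernel-verified Lean document; each statement's English description precedes it below -/
import Mathlib

section
/- For every integer 0 ≤ i ≤ n, the number of matrices M ∈ Alt_n(F_q) with rank(M) = i equals [n choose i]_q · Σ_{s=0}^{i} (−1)^{i−s} q^{C(s,2)+C(i−s,2)} [i choose s]_q, where [a choose b]_q denotes the Gaussian (q-)binomial coefficient and C(m,2) = m(m−1)/2. -/
open Matrix

/-- The Gaussian (q-)binomial coefficient `[a choose b]_q = ∏_{j=0}^{b-1} (q^{a-j} - 1)/(q^{b-j} - 1)`,
as a rational number. -/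
def gaussBinom (q : ℚ) (a b : ℕ) : ℚ :=
  ∏ j ∈ Finset.range b, (q ^ (a - j) - 1) / (q ^ (b - j) - 1)

/-!
Bordering an alternating matrix `A` of size `n` with a column `v` and the row `-vᵀ` gives every
alternating matrix of size `n + 1` exactly once. Since `y ⬝ᵥ A *ᵥ y = 0`, the bordered matrix has
rank `rank A` when `v` lies in the column space of `A`, and `rank A + 2` otherwise. Hence the number
`N(n, i)` of alternating matrices of rank `i` satisfies
`N(n + 1, i) = q ^ i N(n, i) + (q ^ n - q ^ (i - 2)) N(n, i - 2)`,
the last term being absent for `i < 2`. With `S(i)` the alternating sum in the theorem,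
`[n choose i]_q S(i)` satisfies the same recursion, because of the `q`-Pascal rule, `S(1) = 0` and
`S(i + 2) = q ^ i (q ^ (i + 1) - 1) S(i)`.
-/

open Finset

section GaussBinom

variable (q : ℚ) {a b : ℕ}

lemma gaussBinom_zero_right (a : ℕ) : gaussBinom q a 0 = 1 := by simp [gaussBinom]

lemma gaussBinom_eq_zero_of_lt (h : a < b) : gaussBinom q a b = 0 :=
  prod_eq_zero (mem_range.2 h) (by simp)

variable (a b)

lemma gaussBinom_succ_succ :
    gaussBinom q (a + 1) (b + 1) = (q ^ (a + 1) - 1) / (q ^ (b + 1) - 1) * gaussBinom q a b := by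
  simp only [gaussBinom, prod_range_succ' _ b, Nat.add_sub_add_right, Nat.sub_zero, mul_comm]

-- Up to the common denominator both sides are `∏ j ∈ range (b + 1), (q ^ (a + 1 - j) - 1)`.
lemma sub_one_mul_gaussBinom_succ_left :
    (q ^ (a + 1 - b) - 1) * gaussBinom q (a + 1) b = (q ^ (a + 1) - 1) * gaussBinom q a b := by
  have h := (prod_range_succ (fun j ↦ q ^ (a + 1 - j) - 1) b).symm.trans (prod_range_succ' _ b)
  simp only [Nat.add_sub_add_right, Nat.sub_zero] at h
  simp only [gaussBinom, prod_div_distrib, ← mul_div_assoc]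
  rw [mul_comm, h, mul_comm]

variable {q}

lemma pow_succ_sub_one_ne_zero (hq : |q| ≠ 1) : q ^ (a + 1) - 1 ≠ 0 := by
  refine fun h ↦ hq ((pow_eq_one_iff_of_nonneg (abs_nonneg q) a.succ_ne_zero).1 ?_)
  rw [← abs_pow, sub_eq_zero.1 h, abs_one]

lemma sub_one_mul_gaussBinom_succ_succ (hq : |q| ≠ 1) :
    (q ^ (b + 1) - 1) * gaussBinom q (a + 1) (b + 1) = (q ^ (a + 1) - 1) * gaussBinom q a b := by
  have := pow_succ_sub_one_ne_zero b hq
  rw [gaussBinom_succ_succ]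
  field_simp

lemma sub_one_mul_gaussBinom_succ_right (hq : |q| ≠ 1) :
    (q ^ (b + 1) - 1) * gaussBinom q a (b + 1) = (q ^ (a - b) - 1) * gaussBinom q a b := by
  cases a with
  | zero => simp [gaussBinom_eq_zero_of_lt]
  | succ a => rw [sub_one_mul_gaussBinom_succ_succ a b hq, sub_one_mul_gaussBinom_succ_left]

lemma pow_mul_sub_one_mul_gaussBinom_succ_right (hq : |q| ≠ 1) :
    q ^ b * (q ^ (b + 1) - 1) * gaussBinom q a (b + 1) = (q ^ a - q ^ b) * gaussBinom q a b := by
  rw [mul_assoc, sub_one_mul_gaussBinom_succ_right a b hq]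
  rcases le_or_gt b a with h | h
  · rw [← mul_assoc, mul_sub_one, ← pow_add, Nat.add_sub_cancel' h]
  · simp [gaussBinom_eq_zero_of_lt q h]

theorem gaussBinom_succ_succ_eq_add (hq : |q| ≠ 1) :
    gaussBinom q (a + 1) (b + 1) = gaussBinom q a b + q ^ (b + 1) * gaussBinom q a (b + 1) := by
  refine mul_left_cancel₀ (pow_succ_sub_one_ne_zero b hq) ?_
  linear_combination sub_one_mul_gaussBinom_succ_succ a b hq
    - q * pow_mul_sub_one_mul_gaussBinom_succ_right a b hq

end GaussBinom

section AltSum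

/-- The weight `q ^ (C(s, 2) + C(t, 2)) [s + t choose s]_q`, the absolute value of a summand of
`altSum`; writing `t` for `i - s` avoids truncated subtraction. -/
def altWeight (q : ℚ) (s t : ℕ) : ℚ :=
  q ^ (s.choose 2 + t.choose 2) * gaussBinom q (s + t) s

/-- The alternating sum `∑ (-1) ^ t q ^ (C(s, 2) + C(t, 2)) [i choose s]_q` over `s + t = i`. For
`q` the order of a finite field it is the number of invertible alternating `i × i` matrices. -/
def altSum (q : ℚ) (i : ℕ) : ℚ :=
  ∑ p ∈ antidiagonal i, (-1) ^ p.2 * altWeight q p.1 p.2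

lemma altSum_eq_sum_range (q : ℚ) (i : ℕ) :
    altSum q i = ∑ s ∈ range (i + 1),
      (-1) ^ (i - s) * q ^ (s.choose 2 + (i - s).choose 2) * gaussBinom q i s := by
  rw [altSum, Nat.sum_antidiagonal_eq_sum_range_succ fun s t ↦ (-1) ^ t * altWeight q s t]
  refine sum_congr rfl fun s hs ↦ ?_
  rw [altWeight, Nat.add_sub_cancel' (mem_range_succ_iff.1 hs), mul_assoc]

lemma altSum_zero (q : ℚ) : altSum q 0 = 1 := by simp [altSum, altWeight, gaussBinom_zero_right]

lemma sub_one_mul_altWeight_succ_right (q : ℚ) (s t : ℕ) :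
    (q ^ (t + 1) - 1) * altWeight q s (t + 1) =
      q ^ t * (q ^ (s + t + 1) - 1) * altWeight q s t := by
  have h := sub_one_mul_gaussBinom_succ_left q (s + t) s
  rw [add_assoc s t 1, Nat.add_sub_cancel_left] at h
  simp only [altWeight, Nat.choose_succ_succ' t 1, Nat.choose_one_right,
    pow_add _ _ (Nat.choose _ _), add_assoc]
  linear_combination q ^ s.choose 2 * q ^ t.choose 2 * q ^ t * h

variable {q : ℚ} (hq : |q| ≠ 1)

include hq

lemma sub_one_mul_altWeight_succ_left (s t : ℕ) :
    (q ^ (s + 1) - 1) * altWeight q (s + 1) t =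
      q ^ s * (q ^ (s + t + 1) - 1) * altWeight q s t := by
  have h := sub_one_mul_gaussBinom_succ_succ (s + t) s hq
  simp only [altWeight, Nat.choose_succ_succ' s 1, Nat.choose_one_right,
    pow_add _ _ (Nat.choose _ _), add_right_comm s 1 t]
  linear_combination q ^ s.choose 2 * q ^ t.choose 2 * q ^ s * h

lemma altSum_succ (n : ℕ) :
    altSum q (n + 1) =
      ∑ p ∈ antidiagonal n, (-1) ^ p.2 * ((q ^ n - q ^ p.2) * altWeight q p.1 p.2) := by
  refine mul_left_cancel₀ (pow_succ_sub_one_ne_zero n hq) ?_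
  calc (q ^ (n + 1) - 1) * altSum q (n + 1)
    _ = ∑ p ∈ antidiagonal (n + 1), (-1) ^ p.2 * q ^ p.2 * ((q ^ p.1 - 1) * altWeight q p.1 p.2) +
        ∑ p ∈ antidiagonal (n + 1), (-1) ^ p.2 * ((q ^ p.2 - 1) * altWeight q p.1 p.2) := by
      rw [altSum, mul_sum, ← sum_add_distrib]
      refine sum_congr rfl fun p hp ↦ ?_
      rw [← mem_antidiagonal.1 hp, pow_add]
      ring
    _ = ∑ p ∈ antidiagonal n,
          (-1) ^ p.2 * q ^ p.2 * ((q ^ (p.1 + 1) - 1) * altWeight q (p.1 + 1) p.2) +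
        ∑ p ∈ antidiagonal n,
          (-1) ^ (p.2 + 1) * ((q ^ (p.2 + 1) - 1) * altWeight q p.1 (p.2 + 1)) := by
      rw [Nat.sum_antidiagonal_succ, Nat.sum_antidiagonal_succ']
      simp
    _ = (q ^ (n + 1) - 1) * ∑ p ∈ antidiagonal n,
          (-1) ^ p.2 * ((q ^ n - q ^ p.2) * altWeight q p.1 p.2) := by
      rw [mul_sum, ← sum_add_distrib]
      refine sum_congr rfl fun p hp ↦ ?_
      rw [sub_one_mul_altWeight_succ_left hq, sub_one_mul_altWeight_succ_right,
        ← mem_antidiagonal.1 hp, pow_add q p.1 p.2]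
      ring

theorem altSum_add_two (i : ℕ) : altSum q (i + 2) = q ^ i * (q ^ (i + 1) - 1) * altSum q i := by
  rw [altSum_succ hq (i + 1), Nat.sum_antidiagonal_succ, altSum, mul_sum]
  simp only [sub_self, zero_mul, mul_zero, zero_add]
  refine sum_congr rfl fun p hp ↦ ?_
  have h := sub_one_mul_altWeight_succ_left hq p.1 p.2
  rw [← mem_antidiagonal.1 hp]
  linear_combination (-1) ^ p.2 * q ^ p.2 * h

lemma altSum_one : altSum q 1 = 0 := by simp [altSum_succ hq]

theorem gaussBinom_mul_altSum_succ_add_two (n i : ℕ) :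
    gaussBinom q (n + 1) (i + 2) * altSum q (i + 2) =
      q ^ (i + 2) * (gaussBinom q n (i + 2) * altSum q (i + 2)) +
        (q ^ n - q ^ i) * (gaussBinom q n i * altSum q i) := by
  rw [gaussBinom_succ_succ_eq_add n (i + 1) hq, altSum_add_two hq]
  linear_combination altSum q i * pow_mul_sub_one_mul_gaussBinom_succ_right n i hq

end AltSum

section Rank

variable {R K m n k : Type*} [CommRing R] [Field K] [Fintype n]

lemma matrix_rank_neg (A : Matrix m n R) : (-A).rank = A.rank := by
  have h : (-A).mulVecLin = -A.mulVecLin := LinearMap.ext fun v ↦ neg_mulVec v A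
  rw [rank, rank, h, LinearMap.range_neg]

lemma range_mulVecLin_fromCols [Fintype k] (A : Matrix m n R) (B : Matrix m k R) :
    LinearMap.range (fromCols A B).mulVecLin =
      LinearMap.range A.mulVecLin ⊔ LinearMap.range B.mulVecLin := by
  rw [range_mulVecLin, range_mulVecLin, range_mulVecLin, ← Submodule.span_union]
  refine congrArg (Submodule.span R) (Eq.trans (congrArg Set.range ?_) (Set.Sum.elim_range _ _))
  ext (j | j) i <;> rfl

lemma range_mulVecLin_fromCols_replicateCol (A : Matrix m n R) (v : m → R) :
    LinearMap.range (fromCols A (replicateCol Unit v)).mulVecLin =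
      LinearMap.range A.mulVecLin ⊔ R ∙ v := by
  rw [range_mulVecLin_fromCols, range_mulVecLin (replicateCol Unit v)]
  exact congrArg (_ ⊔ Submodule.span R ·) (Set.range_const (ι := Unit) (c := v))

lemma rank_fromCols_replicateCol_of_mem {A : Matrix m n R} {v : m → R}
    (h : v ∈ LinearMap.range A.mulVecLin) :
    (fromCols A (replicateCol Unit v)).rank = A.rank := by
  rw [rank, range_mulVecLin_fromCols_replicateCol,
    sup_eq_left.2 ((Submodule.span_singleton_le_iff_mem _ _).2 h), rank]

lemma rank_fromCols_replicateCol_of_notMem [Finite m] {A : Matrix m n K} {v : m → K}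
    (h : v ∉ LinearMap.range A.mulVecLin) :
    (fromCols A (replicateCol Unit v)).rank = A.rank + 1 := by
  rw [rank, range_mulVecLin_fromCols_replicateCol, Submodule.finrank_sup_span_singleton h, rank]

end Rank

section Alternating

variable {R ι κ : Type*}

/-- A square matrix is alternating if it is skew-symmetric with zero diagonal; the second condition
matters in characteristic two. -/
def IsAlternating [Zero R] [Neg R] (M : Matrix ι ι R) : Prop :=
  Mᵀ = -M ∧ ∀ j, M j j = 0

lemma IsAlternating.apply_eq_neg [Zero R] [Neg R] {A : Matrix ι ι R} (hA : IsAlternating A)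
    (a b : ι) : A b a = -A a b :=
  congrFun₂ hA.1 a b

lemma IsAlternating.submatrix [Zero R] [Neg R] {A : Matrix ι ι R} (hA : IsAlternating A)
    (f : κ → ι) : IsAlternating (A.submatrix f f) :=
  ⟨by ext a b; exact hA.apply_eq_neg _ _, fun _ ↦ hA.2 _⟩

-- The terms at `(a, b)` and `(b, a)` cancel, and the diagonal terms vanish.
lemma IsAlternating.dotProduct_mulVec_self [CommRing R] [Fintype ι] {A : Matrix ι ι R}
    (hA : IsAlternating A) (y : ι → R) : y ⬝ᵥ A *ᵥ y = 0 := by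
  simp only [dotProduct, mulVec, mul_sum]
  rw [← sum_product']
  refine sum_involution (fun p _ ↦ p.swap) ?_ ?_ (by simp) (by simp)
  · intro p _
    rw [Prod.fst_swap, Prod.snd_swap, hA.apply_eq_neg p.1 p.2]
    ring
  · rintro ⟨a, b⟩ _ hab h
    obtain rfl : b = a := congrArg Prod.fst h
    simp [hA.2] at hab

/-- The matrix `A` bordered by a last column `v`, a last row `-vᵀ` and a zero corner: the general
alternating matrix with upper left block `A`. -/
def border [Zero R] [Neg R] (A : Matrix ι ι R) (v : ι → R) : Matrix (ι ⊕ Unit) (ι ⊕ Unit) R :=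
  fromBlocks A (replicateCol Unit v) (replicateRow Unit (-v)) 0

lemma border_eq_fromCols [Zero R] [Neg R] (A : Matrix ι ι R) (v : ι → R) :
    border A v =
      fromCols (fromRows A (replicateRow Unit (-v))) (replicateCol Unit (Sum.elim v 0)) := by
  rw [border, ← fromCols_fromRows_eq_fromBlocks]
  congr 1
  ext (a | a) b <;> rfl

lemma IsAlternating.isAlternating_border [SubtractionMonoid R] {A : Matrix ι ι R}
    (hA : IsAlternating A) (v : ι → R) : IsAlternating (border A v) := by
  constructor
  · rw [border, fromBlocks_transpose, fromBlocks_neg, hA.1]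
    congr 1 <;> ext <;> simp
  · rintro (j | j)
    exacts [hA.2 j, rfl]

/-- Every alternating matrix with one more row and column is uniquely a bordered alternating
matrix. -/
def borderEquiv (R ι : Type*) [SubtractionMonoid R] :
    {A : Matrix ι ι R // IsAlternating A} × (ι → R) ≃
      {M : Matrix (ι ⊕ Unit) (ι ⊕ Unit) R // IsAlternating M} where
  toFun p := ⟨border p.1 p.2, p.1.2.isAlternating_border p.2⟩
  invFun M := (⟨M.1.toBlocks₁₁, M.2.submatrix Sum.inl⟩, fun a ↦ M.1 (.inl a) (.inr ()))
  left_inv _ := rfl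
  right_inv M := by
    ext (a | a) (b | b)
    · rfl
    · rfl
    · exact (M.2.apply_eq_neg _ _).symm
    · exact (M.2.2 _).symm

lemma IsAlternating.sumElim_zero_mem_range_iff [CommRing R] [Fintype ι] {A : Matrix ι ι R}
    {v : ι → R} (hA : IsAlternating A) :
    Sum.elim v 0 ∈ LinearMap.range (fromRows A (replicateRow Unit (-v))).mulVecLin ↔
      v ∈ LinearMap.range A.mulVecLin := by
  simp only [LinearMap.mem_range, mulVecLin_apply, fromRows_mulVec, Sum.elim_eq_iff]
  refine exists_congr fun y ↦ and_iff_left_of_imp ?_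
  rintro rfl
  funext
  change -(A *ᵥ y) ⬝ᵥ y = 0
  rw [neg_dotProduct, dotProduct_comm, hA.dotProduct_mulVec_self, neg_zero]

end Alternating

section BorderRank

variable {K ι : Type*} [Field K] [Fintype ι] {A : Matrix ι ι K} {v : ι → K}

lemma IsAlternating.rank_fromRows_replicateRow_neg (hA : IsAlternating A) :
    (fromRows A (replicateRow Unit (-v))).rank = (fromCols A (replicateCol Unit v)).rank := by
  have h : fromRows A (replicateRow Unit (-v)) = (-fromCols A (replicateCol Unit v))ᵀ := by
    rw [fromCols_neg, transpose_fromCols, transpose_neg, hA.1, neg_neg]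
    rfl
  rw [h, rank_transpose, matrix_rank_neg]

theorem IsAlternating.rank_border_of_mem (hA : IsAlternating A)
    (h : v ∈ LinearMap.range A.mulVecLin) : (border A v).rank = A.rank := by
  rw [border_eq_fromCols, rank_fromCols_replicateCol_of_mem (hA.sumElim_zero_mem_range_iff.2 h),
    hA.rank_fromRows_replicateRow_neg, rank_fromCols_replicateCol_of_mem h]

theorem IsAlternating.rank_border_of_notMem (hA : IsAlternating A)
    (h : v ∉ LinearMap.range A.mulVecLin) : (border A v).rank = A.rank + 2 := by
  rw [border_eq_fromCols,
    rank_fromCols_replicateCol_of_notMem (mt hA.sumElim_zero_mem_range_iff.1 h),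
    hA.rank_fromRows_replicateRow_neg, rank_fromCols_replicateCol_of_notMem h]

end BorderRank

section Counting

/-- The number of alternating `ι × ι` matrices over `R` of rank `i`. -/
noncomputable def cardAlternating (R ι : Type*) [CommRing R] [Fintype ι] (i : ℕ) : ℕ :=
  Nat.card {M : Matrix ι ι R // IsAlternating M ∧ M.rank = i}

lemma cardAlternating_congr (R : Type*) {ι κ : Type*} [CommRing R] [Fintype ι] [Fintype κ]
    (e : ι ≃ κ) (i : ℕ) : cardAlternating R ι i = cardAlternating R κ i := by
  refine Nat.card_congr ((reindex e e).subtypeEquiv fun M ↦ ?_)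
  rw [rank_reindex]
  refine and_congr_left fun _ ↦ ⟨fun h ↦ h.submatrix e.symm, fun h ↦ ?_⟩
  simpa using h.submatrix e

lemma cardAlternating_of_isEmpty (R ι : Type*) [CommRing R] [Nontrivial R] [Fintype ι] [IsEmpty ι]
    (i : ℕ) : cardAlternating R ι i = if i = 0 then 1 else 0 := by
  have h (M : Matrix ι ι R) : (IsAlternating M ∧ M.rank = i) ↔ i = 0 := by
    rw [Subsingleton.elim M 0, rank_zero, eq_comm, and_iff_right]
    exact ⟨Subsingleton.elim _ _, isEmptyElim⟩
  simp only [cardAlternating, h]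
  split_ifs with hi <;> simp [hi]

lemma cardAlternating_eq_zero_of_card_lt {R ι : Type*} [CommRing R] [Nontrivial R] [Fintype ι]
    {i : ℕ} (hi : Fintype.card ι < i) : cardAlternating R ι i = 0 := by
  have : IsEmpty {M : Matrix ι ι R // IsAlternating M ∧ M.rank = i} :=
    ⟨fun M ↦ hi.not_ge (M.2.2 ▸ M.1.rank_le_card_width)⟩
  exact Nat.card_of_isEmpty

section Sum

variable (R : Type*) {ι : Type*} [CommRing R] [Fintype ι]
  [Fintype {A : Matrix ι ι R // IsAlternating A}]

lemma sum_ite_rank_eq (c i : ℕ) :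
    ∑ A : {A : Matrix ι ι R // IsAlternating A}, (if A.1.rank = i then c else 0) =
      c * cardAlternating R ι i := by
  rw [← sum_filter, sum_const, smul_eq_mul, mul_comm, cardAlternating, ← Fintype.card_subtype,
    ← Nat.card_eq_fintype_card, Nat.card_congr
      (Equiv.subtypeSubtypeEquivSubtypeInter IsAlternating fun M : Matrix ι ι R ↦ M.rank = i)]

lemma cardAlternating_sum_unit [Finite R] (i : ℕ) :
    cardAlternating R (ι ⊕ Unit) i =
      ∑ A : {A : Matrix ι ι R // IsAlternating A}, Nat.card {v // (border A.1 v).rank = i} := by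
  let hasRank (M : {M : Matrix (ι ⊕ Unit) (ι ⊕ Unit) R // IsAlternating M}) : Prop := M.1.rank = i
  calc
    _ = Nat.card {M // hasRank M} :=
      Nat.card_congr (Equiv.subtypeSubtypeEquivSubtypeInter IsAlternating (rank · = i)).symm
    _ = Nat.card {p // hasRank (borderEquiv R ι p)} :=
      Nat.card_congr ((borderEquiv R ι).subtypeEquivOfSubtype (p := hasRank)).symm
    _ = Nat.card (Σ A : {A : Matrix ι ι R // IsAlternating A},
          {v // hasRank (borderEquiv R ι (A, v))}) :=
      Nat.card_congr (Equiv.subtypeProdEquivSigmaSubtype fun A v ↦ hasRank (borderEquiv R ι (A, v)))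
    _ = _ := Nat.card_sigma

end Sum

variable {K ι : Type*} [Field K] [Fintype K] [Fintype ι]

lemma card_range_mulVecLin (A : Matrix ι ι K) :
    Nat.card (LinearMap.range A.mulVecLin) = Fintype.card K ^ A.rank := by
  rw [Module.natCard_eq_pow_finrank (K := K), Nat.card_eq_fintype_card, rank]

lemma card_notMem_range_mulVecLin (A : Matrix ι ι K) :
    Nat.card {v // v ∉ LinearMap.range A.mulVecLin} =
      Fintype.card K ^ Fintype.card ι - Fintype.card K ^ A.rank := by
  classical
  rw [← card_range_mulVecLin, Nat.card_eq_fintype_card, Fintype.card_subtype_compl,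
    Fintype.card_fun, ← Nat.card_eq_fintype_card (α := LinearMap.range A.mulVecLin)]

lemma IsAlternating.card_rank_border_eq {A : Matrix ι ι K} (hA : IsAlternating A) (i : ℕ) :
    Nat.card {v // (border A v).rank = i} =
      (if A.rank = i then Fintype.card K ^ i else 0) +
        if A.rank + 2 = i then Fintype.card K ^ Fintype.card ι - Fintype.card K ^ A.rank
        else 0 := by
  have h (v) : (border A v).rank = i ↔
      v ∈ LinearMap.range A.mulVecLin ∧ A.rank = i ∨
        v ∉ LinearMap.range A.mulVecLin ∧ A.rank + 2 = i := by
    by_cases hv : v ∈ LinearMap.range A.mulVecLin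
    · simp only [hA.rank_border_of_mem hv, hv, true_and, not_true, false_and, or_false]
    · simp only [hA.rank_border_of_notMem hv, hv, true_and, not_false_eq_true, false_and, false_or]
  simp only [h]
  rcases eq_or_ne A.rank i with rfl | hi
  · simpa using card_range_mulVecLin A
  rcases eq_or_ne (A.rank + 2) i with rfl | hi'
  · simpa using card_notMem_range_mulVecLin A
  · simp [hi, hi']

lemma cardAlternating_sum_unit_of_lt_two {i : ℕ} (hi : i < 2) :
    cardAlternating K (ι ⊕ Unit) i = Fintype.card K ^ i * cardAlternating K ι i := by
  have (A : Matrix ι ι K) : A.rank + 2 ≠ i := by omega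
  classical
  rw [cardAlternating_sum_unit, ← sum_ite_rank_eq]
  exact sum_congr rfl fun A _ ↦ by rw [A.2.card_rank_border_eq, if_neg (this _), add_zero]

lemma cardAlternating_sum_unit_add_two (i : ℕ) :
    cardAlternating K (ι ⊕ Unit) (i + 2) =
      Fintype.card K ^ (i + 2) * cardAlternating K ι (i + 2) +
        (Fintype.card K ^ Fintype.card ι - Fintype.card K ^ i) * cardAlternating K ι i := by
  classical
  rw [cardAlternating_sum_unit, ← sum_ite_rank_eq, ← sum_ite_rank_eq, ← sum_add_distrib]
  refine sum_congr rfl fun A _ ↦ ?_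
  rw [A.2.card_rank_border_eq]
  congr 1
  simp +contextual

lemma cast_cardAlternating_sum_unit_add_two (i : ℕ) :
    (cardAlternating K (ι ⊕ Unit) (i + 2) : ℚ) =
      Fintype.card K ^ (i + 2) * cardAlternating K ι (i + 2) +
        (Fintype.card K ^ Fintype.card ι - Fintype.card K ^ i) * cardAlternating K ι i := by
  rw [cardAlternating_sum_unit_add_two]
  rcases le_or_gt i (Fintype.card ι) with hi | hi
  · simp [Nat.cast_sub (Nat.pow_le_pow_right (Fintype.card_pos (α := K)) hi)]
  · simp [cardAlternating_eq_zero_of_card_lt hi]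

end Counting

theorem card_alternating_rank_eq_general (K ι : Type*) [Field K] [Fintype K] [Fintype ι] (i : ℕ) :
    (cardAlternating K ι i : ℚ) =
      gaussBinom (Fintype.card K) (Fintype.card ι) i * altSum (Fintype.card K) i := by
  have hq : |(Fintype.card K : ℚ)| ≠ 1 := by
    rw [Nat.abs_cast]
    exact_mod_cast Fintype.one_lt_card.ne'
  refine Fintype.induction_empty_option (P := fun ι _ ↦ ∀ i, (cardAlternating K ι i : ℚ) =
    gaussBinom (Fintype.card K) (Fintype.card ι) i * altSum (Fintype.card K) i) ?_ ?_ ?_ ι i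
  · intro ι κ _ e ih i
    let := Fintype.ofEquiv κ e.symm
    rw [← cardAlternating_congr K e, ← Fintype.card_congr e, ih]
  · rintro (_ | i)
    · simp [cardAlternating_of_isEmpty, gaussBinom_zero_right, altSum_zero]
    · simp [cardAlternating_of_isEmpty, gaussBinom_eq_zero_of_lt]
  · intro ι _ ih i
    rw [cardAlternating_congr K (Equiv.optionEquivSumPUnit ι), Fintype.card_option]
    rcases i with _ | _ | i
    · rw [cardAlternating_sum_unit_of_lt_two two_pos]
      simp [ih, gaussBinom_zero_right]
    · rw [zero_add, cardAlternating_sum_unit_of_lt_two one_lt_two]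
      simp [ih, altSum_one hq]
    · rw [cast_cardAlternating_sum_unit_add_two, ih, ih, gaussBinom_mul_altSum_succ_add_two hq]

/-- The number of alternating `n × n` matrices over `F_q` of rank `i` equals
`[n choose i]_q · Σ_{s=0}^{i} (−1)^{i−s} q^{C(s,2)+C(i−s,2)} [i choose s]_q`. -/
theorem card_alternating_rank_eq
    {F : Type*} [Field F] [Fintype F] {n : ℕ} (i : ℕ) (hi : i ≤ n) :
    (Nat.card {M : Matrix (Fin n) (Fin n) F //
        (Mᵀ = -M ∧ ∀ j, M j j = 0) ∧ M.rank = i} : ℚ) =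
      gaussBinom (Fintype.card F) n i *
        ∑ s ∈ Finset.range (i + 1),
          (-1 : ℚ) ^ (i - s) *
            (Fintype.card F : ℚ) ^ (Nat.choose s 2 + Nat.choose (i - s) 2) *
            gaussBinom (Fintype.card F) i s := by
  rw [← altSum_eq_sum_range]
  simpa only [Fintype.card_fin, cardAlternating, IsAlternating] using
    card_alternating_rank_eq_general F (Fin n) i
end

section
/- Let C ⊆ Alt_n(F_q) be such that any two distinct X, Y ∈ C satisfy rank(X − Y) ≥ 2d, where 1 ≤ d ≤ ⌊n/2⌋. Then |C| ≤ q^{(n(n−1)/(2⌊n/2⌋)) · (⌊n/2⌋ − d + 1)} (the Singleton-like bound of Delsarte and Goethals for alternating rank-metric codes). -/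
open Matrix

/-!
The bound is an instance of Delsarte's linear programming method: if a function `f` on a finite
abelian group has nonnegative Fourier coefficients and is nonpositive at the differences of
distinct codewords, then `|C| ∑ f ≤ |G| f 0`. For alternating matrices take `f A` to be the
polynomial of degree `⌊n/2⌋ - d + 1` in `q ^ (-rank A)` that vanishes at the ranks
`2d, 2d + 2, …, 2⌊n/2⌋`; ranks being even, `f` vanishes at all differences of codewords.

The Fourier coefficients are computed by induction on `n`. A character of the alternating matrices
`[[0, vᵀ], [-v, A]]` is given by a vector `w` and a character `φ` of the smaller matrices `A`, and
bordering raises the rank by two exactly when `v` lies outside the column space of `A`. Summing over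
`v` for `w = 0` leaves a coefficient at `φ` in order `n - 1`; for `w ≠ 0` only the matrices `A` with
`A w = 0` survive, which are the alternating forms on the quotient by `w`, and one is left with a
coefficient in order `n - 2`.
-/

section BorderingRank

variable {K m : Type*} [Field K] {n : ℕ}

/-- The matrix `[c | M]`, used to add one row or column at a time. -/
def consCol (c : m → K) (M : Matrix m (Fin n) K) : Matrix m (Fin (n + 1)) K :=
  of fun i => vecCons (c i) (M i)

theorem span_range_col_consCol (c : m → K) (M : Matrix m (Fin n) K) :
    Submodule.span K (Set.range (consCol c M).col) =
      LinearMap.range M.mulVecLin ⊔ Submodule.span K {c} := by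
  have hrange : Set.range (consCol c M).col = insert c (Set.range M.col) := by
    rw [← Fin.range_cons]
    congr 1
    ext j i
    cases j using Fin.cases <;> rfl
  rw [hrange, Submodule.span_insert, range_mulVecLin, sup_comm]

theorem rank_consCol_of_mem {c : m → K} {M : Matrix m (Fin n) K}
    (hc : c ∈ LinearMap.range M.mulVecLin) : (consCol c M).rank = M.rank := by
  rw [rank_eq_finrank_span_cols, span_range_col_consCol,
    sup_eq_left.2 ((Submodule.span_singleton_le_iff_mem c _).2 hc), rank]

theorem rank_consCol_of_notMem [Finite m] {c : m → K} {M : Matrix m (Fin n) K}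
    (hc : c ∉ LinearMap.range M.mulVecLin) : (consCol c M).rank = M.rank + 1 := by
  rw [rank_eq_finrank_span_cols, span_range_col_consCol,
    Submodule.finrank_sup_span_singleton hc, rank]

theorem transpose_consCol_transpose_mulVec [Fintype m] {k : ℕ} (v : m → K) (M : Matrix (Fin k) m K)
    (x : m → K) : (consCol v Mᵀ)ᵀ *ᵥ x = vecCons (v ⬝ᵥ x) (M *ᵥ x) := by
  ext i
  cases i using Fin.cases <;> rfl

end BorderingRank

/-- `R` is the quotient map by the line through `w`, in coordinates, and `S` a section of it. -/
theorem exists_mul_eq_one_and_mulVec_eq_zero {K : Type*} [Field K] {n : ℕ}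
    {w : Fin (n + 1) → K} (hw : w ≠ 0) :
    ∃ (R : Matrix (Fin n) (Fin (n + 1)) K) (S : Matrix (Fin (n + 1)) (Fin n) K),
      R * S = 1 ∧ R *ᵥ w = 0 ∧
        ∀ A : Matrix (Fin (n + 1)) (Fin (n + 1)) K, A *ᵥ w = 0 → A * (S * R) = A := by
  let W := Submodule.span K {w}
  have hdim : Module.finrank K ((Fin (n + 1) → K) ⧸ W) = Module.finrank K (Fin n → K) := by
    have hsum := W.finrank_quotient_add_finrank
    rw [finrank_span_singleton hw, Module.finrank_fin_fun] at hsum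
    rw [Module.finrank_fin_fun]
    omega
  let f := (LinearEquiv.ofFinrankEq _ _ hdim).toLinearMap ∘ₗ W.mkQ
  have hker (x : Fin (n + 1) → K) : f x = 0 ↔ x ∈ W := by simp [f]
  obtain ⟨s, hs⟩ := f.exists_rightInverse_of_surjective
    (LinearMap.range_eq_top.2 ((LinearEquiv.surjective _).comp W.mkQ_surjective))
  refine ⟨f.toMatrix', s.toMatrix', ?_, ?_, fun A hA => ext_of_mulVec_single fun i => ?_⟩
  · rw [← LinearMap.toMatrix'_comp, hs, LinearMap.toMatrix'_id]
  · rw [LinearMap.toMatrix'_mulVec]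
    exact (hker w).2 (Submodule.mem_span_singleton_self w)
  · have hmem : (s ∘ₗ f) (Pi.single i 1) - Pi.single i 1 ∈ W := by
      rw [← hker, map_sub, sub_eq_zero]
      exact LinearMap.congr_fun hs (f (Pi.single i 1))
    obtain ⟨a, ha⟩ := Submodule.mem_span_singleton.1 hmem
    rw [← LinearMap.toMatrix'_comp, ← mulVec_mulVec, LinearMap.toMatrix'_mulVec, ← sub_eq_zero,
      ← mulVec_sub, ← ha, mulVec_smul, hA, smul_zero]

/-- The group of alternating matrices. The vanishing of the diagonal does not follow from
skew-symmetry in characteristic two. -/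
def alternatingMatrices (ι R : Type*) [CommRing R] : AddSubgroup (Matrix ι ι R) where
  carrier := {A | Aᵀ = -A ∧ ∀ i, A i i = 0}
  zero_mem' := by simp
  add_mem' := by
    rintro A B ⟨hA, hA'⟩ ⟨hB, hB'⟩
    exact ⟨by rw [transpose_add, hA, hB, neg_add], fun i => by simp [hA', hB']⟩
  neg_mem' := by
    rintro A ⟨hA, hA'⟩
    exact ⟨by rw [transpose_neg, hA], fun i => by simp [hA']⟩

namespace alternatingMatrices

section Congruence

variable {ι κ R : Type*} [CommRing R]

theorem transpose_eq_neg (A : alternatingMatrices ι R) : A.1ᵀ = -A.1 := A.2.1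

theorem apply_self (A : alternatingMatrices ι R) (i : ι) : A.1 i i = 0 := A.2.2 i

theorem apply_swap (A : alternatingMatrices ι R) (i j : ι) : A.1 j i = -A.1 i j :=
  congrFun₂ (transpose_eq_neg A) i j

variable [Fintype ι]

theorem vecMul_eq_neg_mulVec (A : alternatingMatrices ι R) (x : ι → R) :
    x ᵥ* A.1 = -(A.1 *ᵥ x) := by
  rw [← mulVec_transpose, transpose_eq_neg, neg_mulVec]

theorem dotProduct_mulVec_self (A : alternatingMatrices ι R) (x : ι → R) :
    x ⬝ᵥ A.1 *ᵥ x = 0 := by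
  simp only [dotProduct, mulVec, Finset.mul_sum]
  rw [← Fintype.sum_prod_type' (f := fun i j => x i * (A.1 i j * x j))]
  refine Finset.sum_ninvolution Prod.swap (fun p => ?_) (fun p hp hswap => hp ?_)
    (fun _ => Finset.mem_univ _) Prod.swap_swap
  · rw [Prod.fst_swap, Prod.snd_swap, apply_swap A p.1 p.2]
    ring
  · have hdiag : p.2 = p.1 := congrArg Prod.fst hswap
    rw [hdiag, apply_self, zero_mul, mul_zero]

/-- The congruence `A ↦ Pᵀ A P`, that is, the pullback of alternating forms along `P`. -/
def congruence (P : Matrix ι κ R) : alternatingMatrices ι R →+ alternatingMatrices κ R where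
  toFun A := ⟨Pᵀ * A.1 * P, by
    simp only [transpose_mul, transpose_transpose, transpose_eq_neg, Matrix.mul_neg,
      Matrix.neg_mul, Matrix.mul_assoc], fun i => by
    rw [Matrix.mul_assoc]
    exact dotProduct_mulVec_self A fun k => P k i⟩
  map_zero' := by ext; simp
  map_add' A B := by ext; simp [Matrix.mul_add, Matrix.add_mul]

theorem coe_congruence (P : Matrix ι κ R) (A : alternatingMatrices ι R) :
    (congruence P A).1 = Pᵀ * A.1 * P := rfl

variable [Fintype κ] {P : Matrix ι κ R} {Q : Matrix κ ι R}

theorem congruence_congruence_of_mul_eq {A : alternatingMatrices ι R} (h : A.1 * (P * Q) = A.1) :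
    congruence Q (congruence P A) = A := by
  ext1
  calc Qᵀ * (Pᵀ * A.1 * P) * Q = (P * Q)ᵀ * (A.1 * (P * Q)) := by
        simp only [transpose_mul, Matrix.mul_assoc]
    _ = (A.1ᵀ * (P * Q))ᵀ := by rw [h, transpose_mul A.1ᵀ, transpose_transpose]
    _ = A.1 := by
        rw [transpose_eq_neg, Matrix.neg_mul, h, ← transpose_eq_neg, transpose_transpose]

theorem congruence_congruence_of_mul_eq_one [DecidableEq ι] (h : P * Q = 1)
    (A : alternatingMatrices ι R) : congruence Q (congruence P A) = A :=
  congruence_congruence_of_mul_eq (by rw [h, Matrix.mul_one])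

theorem rank_congruence_le [Nontrivial R] (P : Matrix ι κ R) (A : alternatingMatrices ι R) :
    (congruence P A).1.rank ≤ A.1.rank :=
  (rank_mul_le_left _ _).trans (rank_mul_le_right _ _)

theorem rank_congruence_of_mul_eq_one [Nontrivial R] [DecidableEq ι] (h : P * Q = 1)
    (A : alternatingMatrices ι R) : (congruence P A).1.rank = A.1.rank :=
  (rank_congruence_le P A).antisymm <| by
    conv_lhs => rw [← congruence_congruence_of_mul_eq_one h A]
    exact rank_congruence_le Q _

end Congruence

section Border

variable {R : Type*} [CommRing R] {n : ℕ}

/-- The bordering of alternating matrices: `(v, A)` is sent to `[[0, vᵀ], [-v, A]]`. -/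
def border :
    (Fin n → R) × alternatingMatrices (Fin n) R ≃+ alternatingMatrices (Fin (n + 1)) R where
  toFun p := ⟨of (vecCons (vecCons 0 p.1) fun i => vecCons (-p.1 i) (p.2.1 i)), by
    ext i j
    cases i using Fin.cases <;> cases j using Fin.cases
    exacts [neg_zero.symm, rfl, (neg_neg _).symm, apply_swap p.2 _ _], fun i => by
    cases i using Fin.cases
    exacts [rfl, apply_self p.2 _]⟩
  invFun A := ⟨fun i => A.1 0 i.succ, A.1.submatrix Fin.succ Fin.succ, by
    rw [transpose_submatrix, transpose_eq_neg, submatrix_neg]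
    rfl, fun i => apply_self A i.succ⟩
  left_inv p := rfl
  right_inv A := by
    ext i j
    cases i using Fin.cases <;> cases j using Fin.cases
    exacts [(apply_self A 0).symm, rfl, (apply_swap A _ _).symm, rfl]
  map_add' p r := by
    ext i j
    cases i using Fin.cases <;> cases j using Fin.cases
    exacts [(add_zero 0).symm, rfl, neg_add _ _, rfl]

noncomputable instance {ι : Type*} [Finite ι] [Finite R] : Fintype (alternatingMatrices ι R) :=
  Fintype.ofFinite _

theorem card_fin_succ [Fintype R] :
    Fintype.card (alternatingMatrices (Fin (n + 1)) R) =
      Fintype.card R ^ n * Fintype.card (alternatingMatrices (Fin n) R) := by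
  rw [← Fintype.card_congr border.toEquiv, Fintype.card_prod, Fintype.card_fun, Fintype.card_fin]

end Border

section BorderRank

variable {K : Type*} [Field K] {n : ℕ} {v : Fin n → K} {A : alternatingMatrices (Fin n) K}

theorem coe_border (v : Fin n → K) (A : alternatingMatrices (Fin n) K) :
    (border (v, A)).1 = consCol (vecCons 0 (-v)) (consCol v A.1ᵀ)ᵀ := by
  ext i j
  cases i using Fin.cases <;> cases j using Fin.cases <;> rfl

theorem mem_range_transpose_iff :
    v ∈ LinearMap.range A.1ᵀ.mulVecLin ↔ v ∈ LinearMap.range A.1.mulVecLin := by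
  have hneg : (-A.1).mulVecLin = -A.1.mulVecLin := by ext; simp
  rw [transpose_eq_neg, hneg, LinearMap.range_neg]

theorem mem_range_transpose_consCol_iff :
    vecCons 0 (-v) ∈ LinearMap.range (consCol v A.1ᵀ)ᵀ.mulVecLin ↔
      v ∈ LinearMap.range A.1.mulVecLin := by
  constructor
  · rintro ⟨x, hx⟩
    rw [mulVecLin_apply, transpose_consCol_transpose_mulVec, vecCons_inj] at hx
    exact ⟨-x, by rw [mulVecLin_apply, mulVec_neg, hx.2, neg_neg]⟩
  · rintro ⟨x, rfl⟩
    refine ⟨-x, ?_⟩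
    rw [mulVecLin_apply, mulVecLin_apply, transpose_consCol_transpose_mulVec, dotProduct_comm,
      neg_dotProduct, dotProduct_mulVec_self, neg_zero, mulVec_neg]

theorem rank_border_of_mem (hv : v ∈ LinearMap.range A.1.mulVecLin) :
    (border (v, A)).1.rank = A.1.rank := by
  rw [coe_border, rank_consCol_of_mem (mem_range_transpose_consCol_iff.2 hv), rank_transpose,
    rank_consCol_of_mem (mem_range_transpose_iff.2 hv), rank_transpose]

theorem rank_border_of_notMem (hv : v ∉ LinearMap.range A.1.mulVecLin) :
    (border (v, A)).1.rank = A.1.rank + 2 := by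
  rw [coe_border, rank_consCol_of_notMem (mem_range_transpose_consCol_iff.not.2 hv),
    rank_transpose, rank_consCol_of_notMem (mem_range_transpose_iff.not.2 hv), rank_transpose]

theorem even_rank (A : alternatingMatrices (Fin n) K) : Even A.1.rank := by
  induction n with
  | zero => simp [Nat.le_zero.1 A.1.rank_le_width]
  | succ n ih =>
    obtain ⟨⟨v, B⟩, rfl⟩ := border.surjective A
    by_cases hv : v ∈ LinearMap.range B.1.mulVecLin
    · rw [rank_border_of_mem hv]
      exact ih B
    · rw [rank_border_of_notMem hv]
      exact (ih B).add even_two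

end BorderRank

end alternatingMatrices

section DotProductCharacters

variable {F ι κ : Type*} [Field F] [Fintype ι]

/-- The additive character `v ↦ e(w ⬝ᵥ v)` attached to a vector `w`, where `e` is a primitive
character of the finite field. -/
noncomputable def dotChar [Finite F] : (ι → F) →+ AddChar (ι → F) ℂ :=
  AddMonoidHom.mk'
    (fun w => (AddChar.FiniteField.primitiveChar_to_Complex F).compAddMonoidHom
      (dotProductBilin F F w).toAddMonoidHom)
    fun w w' => by
      ext v
      simp [AddChar.map_add_eq_mul]

theorem dotChar_apply [Finite F] (w v : ι → F) :
    dotChar w v = AddChar.FiniteField.primitiveChar_to_Complex F (w ⬝ᵥ v) := rfl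

theorem dotChar_injective [Finite F] :
    Function.Injective (dotChar : (ι → F) →+ AddChar (ι → F) ℂ) := by
  classical
  refine (injective_iff_map_eq_zero _).2 fun w hw => ?_
  by_contra hne
  obtain ⟨i, hi⟩ := Function.ne_iff.1 hne
  refine AddChar.FiniteField.primitiveChar_to_Complex_isPrimitive F hi ?_
  ext s
  rw [AddChar.mulShift_apply, ← dotProduct_single, ← dotChar_apply, hw]
  rfl

theorem dotChar_eq_zero_iff [Finite F] {w : ι → F} : dotChar w = 0 ↔ w = 0 :=
  map_eq_zero_iff dotChar dotChar_injective

theorem dotChar_surjective [Finite F] :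
    Function.Surjective (dotChar : (ι → F) →+ AddChar (ι → F) ℂ) := by
  classical
  have := Fintype.ofFinite F
  exact ((Fintype.bijective_iff_injective_and_card _).2
    ⟨dotChar_injective, AddChar.card_eq.symm⟩).2

variable [Fintype F]

open Classical in
theorem sum_dotChar [DecidableEq ι] (w : ι → F) :
    ∑ v, dotChar w v = if w = 0 then (Fintype.card F : ℂ) ^ Fintype.card ι else 0 := by
  simp only [AddChar.sum_eq_ite, dotChar_eq_zero_iff, Fintype.card_fun, Nat.cast_pow]

open Classical in
theorem sum_dotChar_range [DecidableEq ι] [Fintype κ] (w : ι → F) (A : Matrix ι κ F) :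
    ∑ v with v ∈ LinearMap.range A.mulVecLin, dotChar w v =
      if w ᵥ* A = 0 then (Fintype.card F : ℂ) ^ A.rank else 0 := by
  let V := LinearMap.range A.mulVecLin
  let χ : AddChar V ℂ := (dotChar w).compAddMonoidHom V.subtype.toAddMonoidHom
  have hχ : χ = 0 ↔ w ᵥ* A = 0 := by
    rw [← dotChar_eq_zero_iff]
    simp only [DFunLike.ext_iff, AddChar.zero_apply]
    constructor
    · intro h x
      rw [dotChar_apply, ← dotProduct_mulVec]
      exact h ⟨A *ᵥ x, x, rfl⟩
    · rintro h ⟨_, x, rfl⟩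
      have hx := h x
      rwa [dotChar_apply, ← dotProduct_mulVec] at hx
  calc ∑ v with v ∈ V, dotChar w v = ∑ v : V, χ v :=
        Finset.sum_subtype (p := (· ∈ V)) (f := dotChar w) _ (by simp)
    _ = if w ᵥ* A = 0 then (Fintype.card F : ℂ) ^ A.rank else 0 := by
        simp only [AddChar.sum_eq_ite, hχ, Module.card_eq_pow_finrank (K := F) (V := V),
          Nat.cast_pow]
        rfl

end DotProductCharacters

namespace alternatingMatrices

variable {F : Type*} [Field F] {n : ℕ}

section BorderChar

variable [Finite F]

/-- The character of bordered matrices induced by a vector `w` and a character `φ`. -/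
noncomputable def borderChar (w : Fin n → F) (φ : AddChar (alternatingMatrices (Fin n) F) ℂ) :
    AddChar (alternatingMatrices (Fin (n + 1)) F) ℂ :=
  (dotChar w).compAddMonoidHom ((AddMonoidHom.fst _ _).comp border.symm.toAddMonoidHom) +
    φ.compAddMonoidHom ((AddMonoidHom.snd _ _).comp border.symm.toAddMonoidHom)

theorem borderChar_border (w v : Fin n → F) (φ : AddChar (alternatingMatrices (Fin n) F) ℂ)
    (A : alternatingMatrices (Fin n) F) :
    borderChar w φ (border (v, A)) = dotChar w v * φ A := rfl

theorem borderChar_zero_zero :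
    borderChar (0 : Fin n → F) (0 : AddChar (alternatingMatrices (Fin n) F) ℂ) = 0 := by
  rw [borderChar, map_zero]
  ext
  simp

theorem exists_eq_borderChar (ψ : AddChar (alternatingMatrices (Fin (n + 1)) F) ℂ) :
    ∃ w φ, ψ = borderChar w φ := by
  obtain ⟨w, hw⟩ := dotChar_surjective
    (ψ.compAddMonoidHom (border.toAddMonoidHom.comp (AddMonoidHom.inl _ _)))
  refine ⟨w, ψ.compAddMonoidHom (border.toAddMonoidHom.comp (AddMonoidHom.inr _ _)), ?_⟩
  ext A
  obtain ⟨⟨v, B⟩, rfl⟩ := border.surjective A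
  calc ψ (border (v, B)) = ψ (border (v, 0)) * ψ (border (0, B)) := by
        rw [← AddChar.map_add_eq_mul, ← map_add, Prod.mk_add_mk, add_zero, zero_add]
    _ = _ := by
        rw [borderChar_border, hw]
        rfl

end BorderChar

section RankCharSum

variable [Fintype F]

/-- The Fourier coefficient at `ψ` of the function `A ↦ g (rank A)` on alternating matrices,
as a linear function of `g`. -/
noncomputable def rankCharSum (ψ : AddChar (alternatingMatrices (Fin n) F) ℂ) :
    (ℕ → ℝ) →ₗ[ℝ] ℂ :=
  ∑ A, (LinearMap.proj A.1.rank).smulRight (ψ A)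

theorem rankCharSum_apply (ψ : AddChar (alternatingMatrices (Fin n) F) ℂ) (g : ℕ → ℝ) :
    rankCharSum ψ g = ∑ A, g A.1.rank • ψ A := by
  simp [rankCharSum]

open Classical in
theorem rankCharSum_const_one (ψ : AddChar (alternatingMatrices (Fin n) F) ℂ) :
    rankCharSum ψ 1 =
      if ψ = 0 then (Fintype.card (alternatingMatrices (Fin n) F) : ℂ) else 0 := by
  simp only [rankCharSum_apply, Pi.one_apply, one_smul, AddChar.sum_eq_ite]

theorem rankCharSum_fin_zero (ψ : AddChar (alternatingMatrices (Fin 0) F) ℂ) (g : ℕ → ℝ) :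
    rankCharSum ψ g = g 0 := by
  have : Subsingleton (alternatingMatrices (Fin 0) F) := Subtype.coe_injective.subsingleton
  rw [rankCharSum_apply, Fintype.sum_subsingleton _ 0]
  simp

open Classical in
theorem rankCharSum_borderChar (w : Fin n → F) (φ : AddChar (alternatingMatrices (Fin n) F) ℂ)
    (g : ℕ → ℝ) :
    rankCharSum (borderChar w φ) g =
      ∑ A : alternatingMatrices (Fin n) F,
        (g (A.1.rank + 2) * (if w = 0 then (Fintype.card F : ℂ) ^ n else 0) +
          (g A.1.rank - g (A.1.rank + 2)) *
            if A.1 *ᵥ w = 0 then (Fintype.card F : ℂ) ^ A.1.rank else 0) * φ A := by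
  rw [rankCharSum_apply, ← border.toEquiv.sum_comp, Fintype.sum_prod_type_right]
  refine Finset.sum_congr rfl fun A _ => ?_
  have hker : w ᵥ* A.1 = 0 ↔ A.1 *ᵥ w = 0 := by rw [vecMul_eq_neg_mulVec, neg_eq_zero]
  have hrange := sum_dotChar_range w A.1
  have hall := sum_dotChar w
  simp only [hker] at hrange
  rw [Fintype.card_fin] at hall
  rw [← hall, ← hrange, Finset.sum_filter, Finset.mul_sum, Finset.mul_sum,
    ← Finset.sum_add_distrib, Finset.sum_mul]
  refine Finset.sum_congr rfl fun v _ => ?_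
  change g (border (v, A)).1.rank • borderChar w φ (border (v, A)) = _
  rw [borderChar_border, Complex.real_smul]
  split_ifs with hv
  · rw [rank_border_of_mem hv]
    ring
  · rw [rank_border_of_notMem hv]
    ring

theorem rankCharSum_borderChar_zero (φ : AddChar (alternatingMatrices (Fin n) F) ℂ)
    (g : ℕ → ℝ) : rankCharSum (borderChar 0 φ) g = rankCharSum φ fun r =>
      (Fintype.card F : ℝ) ^ n * g (r + 2) + (g r - g (r + 2)) * (Fintype.card F : ℝ) ^ r := by
  classical
  rw [rankCharSum_borderChar, rankCharSum_apply]
  refine Finset.sum_congr rfl fun A _ => ?_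
  rw [if_pos rfl, if_pos (mulVec_zero _), Complex.real_smul]
  push_cast
  ring

open Classical in
theorem exists_sum_mulVec_eq_zero {w : Fin (n + 1) → F} (hw : w ≠ 0)
    (φ : AddChar (alternatingMatrices (Fin (n + 1)) F) ℂ) (g : ℕ → ℝ) :
    ∃ φ' : AddChar (alternatingMatrices (Fin n) F) ℂ,
      ∑ A with A.1 *ᵥ w = 0, g A.1.rank • φ A = rankCharSum φ' g := by
  obtain ⟨R, S, hRS, hRw, hSR⟩ := exists_mul_eq_one_and_mulVec_eq_zero hw
  refine ⟨φ.compAddMonoidHom (congruence R), ?_⟩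
  rw [rankCharSum_apply]
  symm
  refine Finset.sum_nbij' (congruence R) (congruence S) (fun B _ => ?_)
    (fun _ _ => Finset.mem_univ _) (fun B _ => congruence_congruence_of_mul_eq_one hRS B)
    (fun A hA => ?_) (fun B _ => ?_)
  · simp [coe_congruence, ← mulVec_mulVec, hRw]
  · exact congruence_congruence_of_mul_eq (hSR A.1 (Finset.mem_filter.1 hA).2)
  · rw [rank_congruence_of_mul_eq_one hRS]
    rfl

theorem exists_rankCharSum_borderChar {w : Fin (n + 1) → F} (hw : w ≠ 0)
    (φ : AddChar (alternatingMatrices (Fin (n + 1)) F) ℂ) (g : ℕ → ℝ) :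
    ∃ φ' : AddChar (alternatingMatrices (Fin n) F) ℂ, rankCharSum (borderChar w φ) g =
      rankCharSum φ' fun r => (g r - g (r + 2)) * (Fintype.card F : ℝ) ^ r := by
  classical
  obtain ⟨φ', h⟩ := exists_sum_mulVec_eq_zero hw φ
    fun r => (g r - g (r + 2)) * (Fintype.card F : ℝ) ^ r
  refine ⟨φ', ?_⟩
  rw [rankCharSum_borderChar, ← h, Finset.sum_filter]
  refine Finset.sum_congr rfl fun A _ => ?_
  simp [hw]

end RankCharSum
end alternatingMatrices

section RankWeight

/-- The `b`-analogue `∏ j < K, (x - b ^ j)` of the descending Pochhammer polynomial. -/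
def qDescPochhammer {R : Type*} [CommRing R] (b : R) (K : ℕ) (x : R) : R :=
  ∏ j ∈ Finset.range K, (x - b ^ j)

section CommRing

variable {R : Type*} [CommRing R] (b x : R) (K : ℕ)

theorem qDescPochhammer_zero : qDescPochhammer b 0 x = 1 := Finset.prod_range_zero _

theorem qDescPochhammer_succ :
    qDescPochhammer b (K + 1) x = qDescPochhammer b K x * (x - b ^ K) :=
  Finset.prod_range_succ _ _

theorem qDescPochhammer_succ_mul :
    qDescPochhammer b (K + 1) (b * x) = b ^ K * (b * x - 1) * qDescPochhammer b K x := by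
  induction K with
  | zero => simp [qDescPochhammer]
  | succ K ih =>
    rw [qDescPochhammer_succ, ih, qDescPochhammer_succ b x K]
    ring

theorem qDescPochhammer_mul_sub :
    qDescPochhammer b (K + 1) (b * x) - qDescPochhammer b (K + 1) x =
      (b ^ (K + 1) - 1) * x * qDescPochhammer b K x := by
  rw [qDescPochhammer_succ_mul, qDescPochhammer_succ]
  ring

end CommRing

theorem qDescPochhammer_pow_pos {R : Type*} [CommRing R] [LinearOrder R] [IsStrictOrderedRing R]
    {b : R} (hb : 1 < b) {K m : ℕ} (hK : K ≤ m) : 0 < qDescPochhammer b K (b ^ m) :=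
  Finset.prod_pos fun _ hj =>
    sub_pos.2 (pow_lt_pow_right₀ hb ((Finset.mem_range.1 hj).trans_le hK))

/-- The extremal function of the linear programming bound, as a function of the rank `r`: the
polynomial of degree `K` in `q ^ (-r)` whose roots are the `K` largest ranks of alternating
matrices of order `n`. -/
def rankWeight {k : Type*} [Field k] (q : k) (n K r : ℕ) : k :=
  qDescPochhammer (q ^ 2) K (q ^ (2 * (n / 2)) / q ^ r)

variable {k : Type*} [Field k] {q : k}

theorem rankWeight_zero_right (q : k) (n : ℕ) : rankWeight q n 0 = 1 :=
  funext fun _ => qDescPochhammer_zero _ _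

theorem rankWeight_apply_zero (q : k) (n K : ℕ) :
    rankWeight q n K 0 = qDescPochhammer (q ^ 2) K (q ^ (2 * (n / 2))) := by
  rw [rankWeight, pow_zero, div_one]

theorem rankWeight_apply_zero_pos [LinearOrder k] [IsStrictOrderedRing k] (hq : 1 < q) {n K : ℕ}
    (hK : K ≤ n / 2) : 0 < rankWeight q n K 0 := by
  rw [rankWeight_apply_zero, pow_mul]
  exact qDescPochhammer_pow_pos (one_lt_pow₀ hq two_ne_zero) hK

theorem rankWeight_zero_left_apply_zero (q : k) {K : ℕ} (hK : K ≠ 0) :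
    rankWeight q 0 K 0 = 0 :=
  Finset.prod_eq_zero (Finset.mem_range.2 (Nat.pos_of_ne_zero hK)) (by simp)

theorem rankWeight_two_mul_add_one (q : k) (m : ℕ) :
    rankWeight q (2 * m + 1) = rankWeight q (2 * m) := by
  have hm : (2 * m + 1) / 2 = 2 * m / 2 := by omega
  ext K r
  rw [rankWeight, rankWeight, hm]

theorem rankWeight_two_mul_eq_zero (hq : q ≠ 0) {n K i : ℕ} (hi : i ≤ n / 2)
    (hK : n / 2 < K + i) : rankWeight q n K (2 * i) = 0 := by
  refine Finset.prod_eq_zero (i := n / 2 - i) (Finset.mem_range.2 (by omega)) ?_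
  rw [sub_eq_zero, div_eq_iff (pow_ne_zero _ hq), ← pow_mul, ← pow_add]
  congr 1
  omega

theorem rankWeight_add_two_add_two (hq : q ≠ 0) (n K r : ℕ) :
    rankWeight q (n + 2) K (r + 2) = rankWeight q n K r := by
  have hn : (n + 2) / 2 = n / 2 + 1 := by omega
  rw [rankWeight, rankWeight, hn, mul_add, pow_add, pow_add q r]
  congr 1
  field_simp

theorem rankWeight_sub_mul_pow (hq : q ≠ 0) (n K r : ℕ) :
    (rankWeight q (n + 2) (K + 1) r - rankWeight q (n + 2) (K + 1) (r + 2)) * q ^ r =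
      ((q ^ 2) ^ (K + 1) - 1) * q ^ (2 * (n / 2)) * rankWeight q n K r := by
  have hn : (n + 2) / 2 = n / 2 + 1 := by omega
  have hscale : q ^ (2 * ((n + 2) / 2)) / q ^ r = q ^ 2 * (q ^ (2 * (n / 2)) / q ^ r) := by
    rw [hn]
    ring
  rw [rankWeight_add_two_add_two hq, rankWeight, rankWeight, hscale, qDescPochhammer_mul_sub,
    rankWeight]
  field_simp

theorem rankWeight_two_mul_add_two_apply_zero (hq : q ≠ 0) (m K : ℕ) :
    rankWeight q (2 * m + 2) (K + 1) 0 = rankWeight q (2 * m + 1) (K + 1) 0 +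
      ((q ^ 2) ^ (K + 1) - 1) * q ^ (2 * m) * rankWeight q (2 * m + 1) K 0 := by
  have h := rankWeight_sub_mul_pow hq (2 * m) K 0
  rw [rankWeight_add_two_add_two hq, pow_zero, mul_one, Nat.mul_div_cancel_left _ two_pos] at h
  rw [rankWeight_two_mul_add_one, ← h, add_sub_cancel]

theorem rankWeight_border_even (hq : q ≠ 0) (m K r : ℕ) :
    q ^ (2 * m + 1) * rankWeight q (2 * m + 2) (K + 1) (r + 2) +
        (rankWeight q (2 * m + 2) (K + 1) r - rankWeight q (2 * m + 2) (K + 1) (r + 2)) * q ^ r =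
      q ^ (2 * m + 1) * rankWeight q (2 * m + 1) (K + 1) r +
        ((q ^ 2) ^ (K + 1) - 1) * q ^ (2 * m) * rankWeight q (2 * m + 1) K r := by
  rw [rankWeight_sub_mul_pow hq, rankWeight_add_two_add_two hq, rankWeight_two_mul_add_one,
    Nat.mul_div_cancel_left _ two_pos]

theorem rankWeight_border_odd (hq : q ≠ 0) (m K r : ℕ) :
    q ^ (2 * m) * rankWeight q (2 * m + 1) K (r + 2) +
        (rankWeight q (2 * m + 1) K r - rankWeight q (2 * m + 1) K (r + 2)) * q ^ r =
      q ^ (2 * m) / (q ^ 2) ^ K * rankWeight q (2 * m) K r := by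
  rw [rankWeight_two_mul_add_one]
  simp only [rankWeight, Nat.mul_div_cancel_left _ two_pos]
  cases K with
  | zero => simp [qDescPochhammer_zero]
  | succ K =>
    obtain ⟨y, hy⟩ : ∃ y, q ^ (2 * m) / q ^ (r + 2) = y := ⟨_, rfl⟩
    have hr : q ^ (2 * m) / q ^ r = q ^ 2 * y := by
      rw [← hy, pow_add]
      field_simp
    have hm' : q ^ (2 * m) = q ^ 2 * y * q ^ r := by
      rw [← hr]
      field_simp
    rw [hr, hy, qDescPochhammer_mul_sub, qDescPochhammer_succ_mul, qDescPochhammer_succ, hm']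
    field_simp
    ring

end RankWeight

section LinearProgrammingBound

open scoped ComplexConjugate ComplexOrder

variable {G : Type*} [AddCommGroup G] [Fintype G]

theorem sum_addChar_mul_sum_mul_conj (f : G → ℂ) (C : Finset G) :
    ∑ ψ : AddChar G ℂ, (∑ a, f a * ψ a) * ((∑ x ∈ C, ψ x) * conj (∑ x ∈ C, ψ x)) =
      Fintype.card G * ∑ x ∈ C, ∑ y ∈ C, f (y - x) := by
  classical
  have hterm (ψ : AddChar G ℂ) :
      (∑ a, f a * ψ a) * ((∑ x ∈ C, ψ x) * conj (∑ x ∈ C, ψ x)) =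
        ∑ x ∈ C, ∑ y ∈ C, ∑ a, f a * ψ (a - (y - x)) := by
    rw [map_sum, Finset.sum_mul_sum, Finset.mul_sum]
    refine Finset.sum_congr rfl fun x _ => ?_
    rw [Finset.mul_sum]
    refine Finset.sum_congr rfl fun y _ => ?_
    rw [Finset.sum_mul]
    refine Finset.sum_congr rfl fun a _ => ?_
    rw [sub_sub_eq_add_sub, add_sub_assoc, sub_eq_add_neg x, AddChar.map_add_eq_mul,
      AddChar.map_add_eq_mul, AddChar.map_neg_eq_conj, mul_assoc]
  simp_rw [hterm]
  rw [Finset.sum_comm, Finset.mul_sum]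
  refine Finset.sum_congr rfl fun x _ => ?_
  rw [Finset.sum_comm, Finset.mul_sum]
  refine Finset.sum_congr rfl fun y _ => ?_
  rw [Finset.sum_comm]
  simp [← Finset.mul_sum, AddChar.sum_apply_eq_ite, sub_eq_zero, mul_comm]

theorem card_mul_sum_le_of_addChar_sum_nonneg {f : G → ℝ}
    (hf : ∀ ψ : AddChar G ℂ, 0 ≤ ∑ a, f a • ψ a) {C : Finset G} (hne : C.Nonempty)
    (hC : ∀ x ∈ C, ∀ y ∈ C, x ≠ y → f (x - y) ≤ 0) :
    C.card * ∑ a, f a ≤ Fintype.card G * f 0 := by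
  classical
  have hcount := sum_addChar_mul_sum_mul_conj (fun a => (f a : ℂ)) C
  have htriv : (∑ a, f a : ℂ) * (C.card * C.card) ≤
      Fintype.card G * ∑ x ∈ C, ∑ y ∈ C, (f (y - x) : ℂ) := by
    rw [← hcount]
    refine le_of_eq_of_le (by simp) (Finset.single_le_sum (fun ψ _ => mul_nonneg ?_ ?_)
      (Finset.mem_univ (0 : AddChar G ℂ)))
    · simpa only [Complex.real_smul] using hf ψ
    · rw [Complex.mul_conj]
      exact Complex.zero_le_real.2 (Complex.normSq_nonneg _)
  have hdiag : ∑ x ∈ C, ∑ y ∈ C, f (y - x) ≤ C.card * f 0 := by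
    rw [← nsmul_eq_mul]
    refine Finset.sum_le_card_nsmul _ _ _ fun x hx => ?_
    rw [← Finset.add_sum_erase C _ hx, sub_self]
    refine add_le_of_nonpos_right (Finset.sum_nonpos fun y hy => ?_)
    exact hC y (Finset.mem_of_mem_erase hy) x hx (Finset.ne_of_mem_erase hy)
  have hreal : (∑ a, f a) * (C.card * C.card) ≤
      Fintype.card G * ∑ x ∈ C, ∑ y ∈ C, f (y - x) := by exact_mod_cast htriv
  have hcard : (0 : ℝ) < C.card := Nat.cast_pos.2 hne.card_pos
  refine le_of_mul_le_mul_right ?_ hcard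
  calc C.card * (∑ a, f a) * C.card = (∑ a, f a) * (C.card * C.card) := by ring
    _ ≤ Fintype.card G * (C.card * f 0) := hreal.trans (by gcongr)
    _ = Fintype.card G * f 0 * C.card := by ring

end LinearProgrammingBound

namespace alternatingMatrices

variable {F : Type*} [Field F] [Fintype F] {n : ℕ}

theorem rankCharSum_borderChar_zero_rankWeight_odd {m : ℕ} (K : ℕ)
    (φ : AddChar (alternatingMatrices (Fin (2 * m)) F) ℂ) :
    rankCharSum (borderChar 0 φ) (rankWeight (Fintype.card F : ℝ) (2 * m + 1) K) =
      ((Fintype.card F : ℝ) ^ (2 * m) / ((Fintype.card F : ℝ) ^ 2) ^ K) •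
        rankCharSum φ (rankWeight (Fintype.card F : ℝ) (2 * m) K) := by
  rw [rankCharSum_borderChar_zero, ← map_smul]
  exact congrArg _ (funext (rankWeight_border_odd (Nat.cast_ne_zero.2 Fintype.card_ne_zero) m K))

theorem rankCharSum_borderChar_zero_rankWeight_even {m : ℕ} (K : ℕ)
    (φ : AddChar (alternatingMatrices (Fin (2 * m + 1)) F) ℂ) :
    rankCharSum (borderChar 0 φ) (rankWeight (Fintype.card F : ℝ) (2 * m + 2) (K + 1)) =
      (Fintype.card F : ℝ) ^ (2 * m + 1) •
          rankCharSum φ (rankWeight (Fintype.card F : ℝ) (2 * m + 1) (K + 1)) +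
        ((((Fintype.card F : ℝ) ^ 2) ^ (K + 1) - 1) * (Fintype.card F : ℝ) ^ (2 * m)) •
          rankCharSum φ (rankWeight (Fintype.card F : ℝ) (2 * m + 1) K) := by
  rw [rankCharSum_borderChar_zero, ← map_smul, ← map_smul, ← map_add]
  exact congrArg _ (funext (rankWeight_border_even (Nat.cast_ne_zero.2 Fintype.card_ne_zero) m K))

theorem exists_rankCharSum_borderChar_rankWeight {w : Fin (n + 1) → F} (hw : w ≠ 0) (K : ℕ)
    (φ : AddChar (alternatingMatrices (Fin (n + 1)) F) ℂ) :
    ∃ φ' : AddChar (alternatingMatrices (Fin n) F) ℂ,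
      rankCharSum (borderChar w φ) (rankWeight (Fintype.card F : ℝ) (n + 2) (K + 1)) =
        ((((Fintype.card F : ℝ) ^ 2) ^ (K + 1) - 1) * (Fintype.card F : ℝ) ^ (2 * (n / 2))) •
          rankCharSum φ' (rankWeight (Fintype.card F : ℝ) n K) := by
  obtain ⟨φ', hφ'⟩ :=
    exists_rankCharSum_borderChar hw φ (rankWeight (Fintype.card F : ℝ) (n + 2) (K + 1))
  refine ⟨φ', ?_⟩
  rw [hφ', ← map_smul]
  exact congrArg _ (funext (rankWeight_sub_mul_pow (Nat.cast_ne_zero.2 Fintype.card_ne_zero) n K))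

open scoped ComplexOrder in
theorem rankCharSum_rankWeight_nonneg (K : ℕ) (ψ : AddChar (alternatingMatrices (Fin n) F) ℂ) :
    0 ≤ rankCharSum ψ (rankWeight (Fintype.card F : ℝ) n K) := by
  classical
  have hq : (1 : ℝ) ≤ Fintype.card F := Nat.one_le_cast.2 Fintype.card_pos
  have hcoeff (K : ℕ) : 0 ≤ ((Fintype.card F : ℝ) ^ 2) ^ (K + 1) - 1 :=
    sub_nonneg.2 (one_le_pow₀ (one_le_pow₀ hq))
  induction n using Nat.strong_induction_on generalizing K with | _ n ih
  rcases K with _ | K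
  · rw [rankWeight_zero_right, rankCharSum_const_one]
    split_ifs <;> simp
  rcases n with _ | n
  · rw [rankCharSum_fin_zero, rankWeight_zero_left_apply_zero _ K.succ_ne_zero,
      Complex.ofReal_zero]
  obtain ⟨w, φ, rfl⟩ := exists_eq_borderChar ψ
  rcases eq_or_ne w 0 with rfl | hw
  · rcases Nat.even_or_odd' n with ⟨m, rfl | rfl⟩
    · rw [rankCharSum_borderChar_zero_rankWeight_odd]
      exact smul_nonneg (by positivity) (ih _ (by omega) _ _)
    · rw [rankCharSum_borderChar_zero_rankWeight_even]
      exact add_nonneg (smul_nonneg (by positivity) (ih _ (by omega) _ _))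
        (smul_nonneg (mul_nonneg (hcoeff K) (by positivity)) (ih _ (by omega) _ _))
  · rcases n with _ | n
    · exact absurd (Subsingleton.elim w 0) hw
    obtain ⟨φ', hφ'⟩ := exists_rankCharSum_borderChar_rankWeight hw K φ
    rw [hφ']
    exact smul_nonneg (mul_nonneg (hcoeff K) (by positivity)) (ih _ (by omega) _ _)

/-- The base of the `K`-th power is `q ^ (n - 1)` for even `n` and `q ^ n` for odd `n`. -/
theorem rankCharSum_zero_rankWeight (n K : ℕ) :
    rankCharSum (0 : AddChar (alternatingMatrices (Fin n) F) ℂ)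
        (rankWeight (Fintype.card F : ℝ) n K) =
      ((Fintype.card (alternatingMatrices (Fin n) F) * rankWeight (Fintype.card F : ℝ) n K 0 /
        ((Fintype.card F : ℝ) ^ (2 * ((n + 1) / 2)) / Fintype.card F) ^ K : ℝ) : ℂ) := by
  classical
  have hq : (Fintype.card F : ℝ) ≠ 0 := Nat.cast_ne_zero.2 Fintype.card_ne_zero
  induction n generalizing K with
  | zero =>
    rcases K with _ | K
    · simp [rankWeight_zero_right, rankCharSum_const_one]
    · simp [rankCharSum_fin_zero, rankWeight_zero_left_apply_zero]
  | succ n ih =>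
    rcases K with _ | K
    · simp [rankWeight_zero_right, rankCharSum_const_one]
    rw [← borderChar_zero_zero]
    rcases Nat.even_or_odd' n with ⟨m, rfl | rfl⟩
    · have hscale : (Fintype.card F : ℝ) ^ (2 * (m + 1)) / Fintype.card F =
          (Fintype.card F : ℝ) ^ 2 * ((Fintype.card F : ℝ) ^ (2 * m) / Fintype.card F) := by ring
      rw [rankCharSum_borderChar_zero_rankWeight_odd, ih, Complex.real_smul, card_fin_succ,
        rankWeight_two_mul_add_one, ← Complex.ofReal_mul, show (2 * m + 1) / 2 = m by omega,
        show (2 * m + 1 + 1) / 2 = m + 1 by omega, hscale, mul_pow]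
      refine congrArg _ ?_
      push_cast
      field_simp
    · have hscale : (Fintype.card F : ℝ) ^ (2 * (m + 1)) / Fintype.card F =
          (Fintype.card F : ℝ) ^ (2 * m + 1) := by
        rw [div_eq_iff hq]
        ring
      rw [rankCharSum_borderChar_zero_rankWeight_even, ih, ih, card_fin_succ (n := 2 * m + 1),
        rankWeight_two_mul_add_two_apply_zero hq, show (2 * m + 1 + 1) / 2 = m + 1 by omega,
        show (2 * m + 1 + 1 + 1) / 2 = m + 1 by omega, hscale]
      simp only [Complex.real_smul, ← Complex.ofReal_mul, ← Complex.ofReal_add]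
      refine congrArg _ ?_
      push_cast
      field_simp
      ring

theorem sum_rankWeight_rank (n K : ℕ) :
    ∑ A : alternatingMatrices (Fin n) F, rankWeight (Fintype.card F : ℝ) n K A.1.rank =
      Fintype.card (alternatingMatrices (Fin n) F) * rankWeight (Fintype.card F : ℝ) n K 0 /
        ((Fintype.card F : ℝ) ^ (2 * ((n + 1) / 2)) / Fintype.card F) ^ K := by
  rw [← Complex.ofReal_inj, ← rankCharSum_zero_rankWeight, rankCharSum_apply]
  simp

open scoped ComplexOrder in
theorem card_le_pow_of_two_mul_le_rank_sub {d : ℕ} (hd : 1 ≤ d) (hdn : d ≤ n / 2)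
    {C : Finset (alternatingMatrices (Fin n) F)}
    (hC : ∀ X ∈ C, ∀ Y ∈ C, X ≠ Y → 2 * d ≤ (X - Y).1.rank) :
    (C.card : ℝ) ≤
      ((Fintype.card F : ℝ) ^ (2 * ((n + 1) / 2)) / Fintype.card F) ^ (n / 2 - d + 1) := by
  rcases C.eq_empty_or_nonempty with rfl | hne
  · rw [Finset.card_empty, Nat.cast_zero]
    positivity
  set K := n / 2 - d + 1
  have hq : (1 : ℝ) < Fintype.card F := Nat.one_lt_cast.2 Fintype.one_lt_card
  have hq0 : (0 : ℝ) < Fintype.card F := zero_lt_one.trans hq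
  have hvanish : ∀ X ∈ C, ∀ Y ∈ C, X ≠ Y →
      rankWeight (Fintype.card F : ℝ) n K (X - Y).1.rank ≤ 0 := fun X hX Y hY hXY => by
    obtain ⟨i, hi⟩ := (even_rank (X - Y)).two_dvd
    have hdi := hC X hX Y hY hXY
    have hin := (X - Y).1.rank_le_width
    rw [hi, rankWeight_two_mul_eq_zero hq0.ne' (by omega) (by omega)]
  have hpos : 0 < rankWeight (Fintype.card F : ℝ) n K 0 := rankWeight_apply_zero_pos hq (by omega)
  have hcard : (0 : ℝ) < Fintype.card (alternatingMatrices (Fin n) F) :=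
    Nat.cast_pos.2 Fintype.card_pos
  have hlp := card_mul_sum_le_of_addChar_sum_nonneg
    (f := fun A : alternatingMatrices (Fin n) F => rankWeight (Fintype.card F : ℝ) n K A.1.rank)
    (fun ψ => (rankCharSum_rankWeight_nonneg K ψ).trans_eq (rankCharSum_apply _ _)) hne hvanish
  rw [sum_rankWeight_rank, ZeroMemClass.coe_zero, rank_zero, ← mul_div_assoc,
    div_le_iff₀ (by positivity), mul_comm] at hlp
  exact le_of_mul_le_mul_left hlp (mul_pos hcard hpos)

end alternatingMatrices

theorem pow_two_mul_half_succ_div {k : Type*} [Field k] {q : k} (hq : q ≠ 0) {n : ℕ}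
    (hn : n / 2 ≠ 0) : q ^ (2 * ((n + 1) / 2)) / q = q ^ (n * (n - 1) / (2 * (n / 2))) := by
  rw [div_eq_iff hq, ← pow_succ]
  congr 1
  obtain ⟨m, rfl | rfl⟩ := Nat.even_or_odd' n
  · have hhalf : 2 * m / 2 = m := by omega
    rw [hhalf, Nat.mul_div_cancel_left _ (by omega)]
    omega
  · have hhalf : (2 * m + 1) / 2 = m := by omega
    rw [hhalf, Nat.add_sub_cancel, Nat.mul_div_cancel _ (by omega)]
    omega

/-- Singleton-like bound of Delsarte and Goethals for alternating rank-metric codes: if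
`C ⊆ Alt_n(F_q)` is such that any two distinct codewords are at rank distance at least
`2d`, with `1 ≤ d ≤ ⌊n/2⌋`, then `|C| ≤ q^{(n(n−1)/(2⌊n/2⌋))·(⌊n/2⌋ − d + 1)}`. -/
theorem singleton_like_bound
    {F : Type*} [Field F] [Fintype F] {n d : ℕ}
    (hd : 1 ≤ d) (hdn : d ≤ n / 2)
    (C : Set (Matrix (Fin n) (Fin n) F))
    (hCalt : ∀ X ∈ C, Xᵀ = -X ∧ ∀ i, X i i = 0)
    (hdist : ∀ X ∈ C, ∀ Y ∈ C, X ≠ Y → 2 * d ≤ (X - Y).rank) :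
    Nat.card C ≤ Fintype.card F ^ ((n * (n - 1) / (2 * (n / 2))) * (n / 2 - d + 1)) := by
  classical
  let D := (Subtype.val ⁻¹' C : Set (alternatingMatrices (Fin n) F)).toFinset
  have hcard : Nat.card C = D.card := by
    rw [Nat.card_coe_set_eq, ← Set.ncard_eq_toFinset_card',
      Set.ncard_preimage_of_injective_subset_range Subtype.val_injective]
    exact fun X hX => ⟨⟨X, hCalt X hX⟩, rfl⟩
  have hmem {X : alternatingMatrices (Fin n) F} : X ∈ D → X.1 ∈ C := Set.mem_toFinset.1
  have hbound := alternatingMatrices.card_le_pow_of_two_mul_le_rank_sub (C := D) hd hdn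
    fun X hX Y hY hXY => hdist X (hmem hX) Y (hmem hY) (Subtype.coe_injective.ne hXY)
  rw [pow_two_mul_half_succ_div (Nat.cast_ne_zero.2 Fintype.card_ne_zero)
    (by omega), ← pow_mul] at hbound
  rw [hcard]
  exact_mod_cast hbound
end
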